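/- (Convergence of one step of the inverse power method on a subspace, Algorithm 1.) Under the stated setup, assuming the first k exact eigenvalues λ_1 ≤ ⋯ ≤ λ_k are those closest to the first k Ritz values λ_1^{(ℓ+1)} ≤ ⋯ ≤ λ_k^{(ℓ+1)} of A on K' and δ_{k,i}^{(ℓ+1)} := min_{k<j≤m} |μ_j^{(ℓ+1)} − μ_i| > 0 for 1 ≤ i ≤ k (where μ_i = 1/λ_i and μ_j^{(ℓ+1)} = 1/λ_j^{(ℓ+1)}), there exist A-orthonormal exact eigenvectors u_1, …, u_k of A associated with λ_1, …, λ_k such that (Σ_{i=1}^k ‖u_i − E_{m,k}^{(ℓ+1)} u_i‖_A²)^{1/2} ≤ θ_{K'} · √(λ_k/λ_{k+1}) · (√(λ_k^{(ℓ+1)}) η_{K',k,k}) · (Σ_{i=1}^k ‖u_i − E_{m,k}^{(ℓ)} u_i‖_A²)^{1/2}, where θ_{K'} = √(1 + μ_{k+1}^{(ℓ+1)} η_{K'}² / (δ_{k,k}^{(ℓ+1)})²) and η_{K',k,k} = (1 + μ_{k+1}^{(ℓ+1)}/δ_{k,k}^{(ℓ+1)}) η_{K'}. -/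

import Mathlib

/-!
Write `a(x, y) = xᵀAy` and `b(x, y) = xᵀy`. The exact eigenvectors can be taken to be the given
`U_1, …, U_k`. Let `W` be the span of the first `k` Ritz vectors `ũ_i`, let `Y = A⁻¹ W` be the span
of the new approximations `y_i = λ̃_i A⁻¹ ũ_i`, and let `E` be the `a`-orthogonal projection onto
`Y`. Four estimates are combined.

* Trace identity (`proj_trace`). As `E` has trace `k`, `∑_{l ≤ k} ‖U_l - E U_l‖_A²` equals
  `∑_{l > k} ‖E U_l‖_A²`. Since `a(ũ_i, y_j) = δ_ij` with `ũ_i` orthonormal, the Gram matrix of the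
  `y_i` dominates the identity, so this is at most `∑_{l > k} ∑_i a(y_i, U_l)²`.
* Power step (`power_step`). One has `a(y_i, U_l) = λ̃_i b(ũ_i, U_l)`, and both `√λ̃_i ũ_i` and
  `√λ_l U_l` are `L²`-orthonormal. Exchanging the roles of the two families, the last double sum is
  at most `λ̃_k (λ_k / λ_{k+1}) ∑_{l ≤ k} dist_{L²}(U_l, W)²`.
* Ritz estimate (`ritz_l2`). Let `P` project `a`-orthogonally onto `K'`, and let `e = U_l - P U_l`.
  The `ũ_j`-coefficient `c_j` of `P U_l` satisfies `c_j (μ_l - μ̃_j) = b(e, ũ_j)`. Bessel's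
  inequality bounds the part of `P U_l` outside `W`, whence
  `dist_{L²}(U_l, W) ≤ (1 + μ̃_{k+1} / δ_k) ‖e‖₂`. That `δ_k` bounds the gap for every `l ≤ k` follows
  from the interlacing `μ̃_{k+1} ≤ μ_{k+1}` (`ritz_ge`).
* Duality (`nitsche`). `‖e‖₂ ≤ η ‖e‖_A`, and `‖e‖_A` is at most the `A`-distance of `U_l` to the
  previous approximation space, which lies in `K'` (`proj_best`).

The factor `θ` in the bound is at least `1`, so it can be inserted at the end.
-/

open Matrix

/-- The Euclidean (`L²`) norm on `ℝⁿ`: `‖x‖₂ = √(xᵀx)`. -/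
noncomputable def l2N {n : ℕ} (x : Fin n → ℝ) : ℝ := Real.sqrt (x ⬝ᵥ x)

/-- The energy norm induced by the matrix `A`: `‖x‖_A = √(xᵀAx)`. -/
noncomputable def aN {n : ℕ} (A : Matrix (Fin n) (Fin n) ℝ) (x : Fin n → ℝ) : ℝ :=
  Real.sqrt (x ⬝ᵥ (A *ᵥ x))

/-- `η_K = sup_{‖g‖₂ = 1} ‖(I - P_K) A⁻¹ g‖_A`, where `P` is the `A`-orthogonal
projection onto the subspace `K`. -/
noncomputable def etaK {n : ℕ} (A : Matrix (Fin n) (Fin n) ℝ)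
    (P : (Fin n → ℝ) →ₗ[ℝ] (Fin n → ℝ)) : ℝ :=
  sSup ((fun g => aN A ((A⁻¹ *ᵥ g) - P (A⁻¹ *ᵥ g))) '' {g | l2N g = 1})

/-! ### Estimates for a pair of bilinear forms -/

section Forms
open LinearMap (BilinForm)

variable {V : Type*} [AddCommGroup V] [Module ℝ V]

/-- The Cauchy–Schwarz inequality for a symmetric positive semidefinite form. -/
theorem form_cs (b : BilinForm ℝ V) (hs : ∀ x y, b x y = b y x) (hp : ∀ x, 0 ≤ b x x) (x y : V) :
    (b x y) ^ 2 ≤ b x x * b y y := by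
  have h := LinearMap.BilinForm.apply_mul_apply_le_of_forall_zero_le b hp x y
  rw [hs y x] at h
  nlinarith

theorem form_sum_self {ι : Type*} [DecidableEq ι] (b : BilinForm ℝ V)
    (t : ι → V) (w : ι → ℝ) (ht : ∀ i j, b (t i) (t j) = if i = j then w j else 0)
    (s : Finset ι) (c : ι → ℝ) :
    b (∑ j ∈ s, c j • t j) (∑ j ∈ s, c j • t j) = ∑ j ∈ s, c j ^ 2 * w j := by
  simp only [map_sum, LinearMap.sum_apply, map_smul, LinearMap.smul_apply, ht, smul_eq_mul]
  refine Finset.sum_congr rfl fun j hj => ?_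
  simp [hj]
  ring

theorem form_sub_sum {ι : Type*} [DecidableEq ι] (b : BilinForm ℝ V) (hs : ∀ x y, b x y = b y x)
    (t : ι → V) (w : ι → ℝ) (ht : ∀ i j, b (t i) (t j) = if i = j then w j else 0)
    (s : Finset ι) (c : ι → ℝ) (x : V) :
    b (x - ∑ j ∈ s, c j • t j) (x - ∑ j ∈ s, c j • t j) =
      b x x - 2 * ∑ j ∈ s, c j * b x (t j) + ∑ j ∈ s, c j ^ 2 * w j := by
  have h1 : b x (∑ j ∈ s, c j • t j) = ∑ j ∈ s, c j * b x (t j) := by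
    simp [map_sum]
  have h2 := form_sum_self b t w ht s c
  simp only [map_sub, LinearMap.sub_apply]
  rw [hs (∑ j ∈ s, c j • t j) x, h1, h2]
  ring

/-- Among all combinations of a `b`-orthogonal family, the squared distance to `x` is at least
that of the `b`-orthogonal projection. -/
theorem form_best {ι : Type*} [DecidableEq ι] (b : BilinForm ℝ V) (hs : ∀ x y, b x y = b y x)
    (t : ι → V) (w : ι → ℝ) (hw : ∀ i, 0 < w i)
    (ht : ∀ i j, b (t i) (t j) = if i = j then w j else 0)
    (s : Finset ι) (c : ι → ℝ) (x : V) :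
    b x x - ∑ j ∈ s, (b x (t j)) ^ 2 / w j ≤
      b (x - ∑ j ∈ s, c j • t j) (x - ∑ j ∈ s, c j • t j) := by
  rw [form_sub_sum b hs t w ht, sub_add, Finset.mul_sum, ← Finset.sum_sub_distrib]
  refine sub_le_sub_left (Finset.sum_le_sum fun j _ => ?_) _
  rw [le_div_iff₀ (hw j)]
  nlinarith [sq_nonneg (b x (t j) - c j * w j)]

/-- Bessel's inequality for a `b`-orthogonal family with squared norms `w`. -/
theorem form_bessel {ι : Type*} [DecidableEq ι] (b : BilinForm ℝ V) (hs : ∀ x y, b x y = b y x)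
    (hp : ∀ x, 0 ≤ b x x) (t : ι → V) (w : ι → ℝ) (hw : ∀ i, 0 < w i)
    (ht : ∀ i j, b (t i) (t j) = if i = j then w j else 0) (s : Finset ι) (x : V) :
    ∑ j ∈ s, (b x (t j)) ^ 2 / w j ≤ b x x := by
  have h := form_sub_sum b hs t w ht s (fun j => b x (t j) / w j) x
  have h0 := hp (x - ∑ j ∈ s, (b x (t j) / w j) • t j)
  rw [h, sub_add, Finset.mul_sum, ← Finset.sum_sub_distrib] at h0
  have : ∀ j ∈ s, 2 * (b x (t j) / w j * b x (t j)) - (b x (t j) / w j) ^ 2 * w j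
      = (b x (t j)) ^ 2 / w j := by
    intro j _
    have := (hw j).ne'
    field_simp
    ring
  rw [Finset.sum_congr rfl this] at h0
  linarith

/-- Parseval's identity for `b` when the `a`-orthonormal eigenvectors `U` span the space. -/
theorem parseval_b {n : ℕ} (a b : BilinForm ℝ V) (U : Fin n → V) (Λ : Fin n → ℝ)
    (hU : ∀ v, ∑ i, a (U i) v • U i = v)
    (hab : ∀ i v, a (U i) v = Λ i * b (U i) v) (x y : V) :
    b x y = ∑ i, Λ i * (b (U i) x * b (U i) y) := by
  conv_lhs => rw [← hU x]
  simp only [map_sum, LinearMap.sum_apply, map_smul, LinearMap.smul_apply, smul_eq_mul, hab]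
  exact Finset.sum_congr rfl fun i _ => by ring

theorem parseval_a {n : ℕ} (a : BilinForm ℝ V) (U : Fin n → V)
    (hU : ∀ v, ∑ i, a (U i) v • U i = v) (x y : V) :
    a x y = ∑ i, a (U i) x * a (U i) y := by
  conv_lhs => rw [← hU x]
  simp only [map_sum, LinearMap.sum_apply, map_smul, LinearMap.smul_apply, smul_eq_mul]

theorem sum_split {M : Type*} [AddCommMonoid M] {n k : ℕ} (h : k ≤ n) (f : Fin n → M) :
    ∑ i, f i = ∑ i : Fin k, f (Fin.castLE h i) + ∑ i with k ≤ i.val, f i := by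
  rw [← Finset.sum_filter_not_add_sum_filter Finset.univ (fun i : Fin n => k ≤ i.val)]
  congr 1
  symm
  refine Finset.sum_bij (fun i _ => Fin.castLE h i) ?_ ?_ ?_ ?_
  · simp
  · intro i _ j _ hij
    simpa using hij
  · intro j hj
    simp at hj
    exact ⟨⟨j, hj⟩, by simp, rfl⟩
  · simp

/-- Interlacing at index `k` (counted from `0`), for inverse eigenvalues: a nonzero combination of
the first `k + 1` Ritz vectors is `a`-orthogonal to the first `k` eigenvectors, and comparing
two bounds for its Rayleigh quotient gives the claim. -/
theorem ritz_ge {n m k : ℕ} (hkn : k < n) (hkm : k < m) (a b : BilinForm ℝ V)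
    (U : Fin n → V) (Λ : Fin n → ℝ) (hΛ : ∀ i, 0 < Λ i) (hmono : Monotone Λ)
    (hU : ∀ v, ∑ i, a (U i) v • U i = v) (hab : ∀ i v, a (U i) v = Λ i * b (U i) v)
    (t : Fin m → V) (μ : Fin m → ℝ) (hμ : Antitone μ)
    (hta : ∀ i j, a (t i) (t j) = if i = j then 1 else 0)
    (htb : ∀ i j, b (t i) (t j) = if i = j then μ j else 0) :
    μ ⟨k, hkm⟩ ≤ 1 / Λ ⟨k, hkn⟩ := by
  let ι : Fin (k + 1) → Fin m := Fin.castLE hkm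
  have hι : Function.Injective ι := Fin.castLE_injective _
  let S : (Fin (k + 1) → ℝ) →ₗ[ℝ] V := Fintype.linearCombination ℝ (t ∘ ι)
  let F : (Fin (k + 1) → ℝ) →ₗ[ℝ] (Fin k → ℝ) :=
    LinearMap.pi fun i => (a (U (Fin.castLE hkn.le i))) ∘ₗ S
  obtain ⟨c, hc, hc0⟩ := (Submodule.ne_bot_iff _).1
    (LinearMap.ker_ne_bot_of_finrank_lt (f := F) (by simp))
  set x := S c with hx
  have hxs : x = ∑ j, c j • t (ι j) := by simp [hx, S, Fintype.linearCombination_apply]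
  have horth : ∀ i : Fin n, ¬ k ≤ i.val → a (U i) x = 0 := by
    intro i hi
    exact congrFun (LinearMap.mem_ker.1 hc) ⟨i, by omega⟩
  have e1 : a x x = ∑ j, c j ^ 2 := by
    have := form_sum_self a (t ∘ ι) (fun _ => 1)
      (by intro i j; simp [hta, hι.eq_iff]) Finset.univ c
    simpa only [hxs, mul_one, Function.comp_apply] using this
  have e2 : b x x = ∑ j, c j ^ 2 * μ (ι j) := by
    have := form_sum_self b (t ∘ ι) (μ ∘ ι)
      (by intro i j; simp [htb, hι.eq_iff]) Finset.univ c
    simpa only [hxs, Function.comp_apply] using this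
  have hpos : 0 < ∑ j, c j ^ 2 := by
    obtain ⟨j, hj⟩ := Function.ne_iff.1 hc0
    have hj' : c j ≠ 0 := hj
    exact Finset.sum_pos' (fun _ _ => sq_nonneg _) ⟨j, Finset.mem_univ _, by positivity⟩
  have u1 : b x x ≤ a x x * (1 / Λ ⟨k, hkn⟩) := by
    rw [parseval_b a b U Λ hU hab, parseval_a a U hU, Finset.sum_mul]
    refine Finset.sum_le_sum fun i _ => ?_
    by_cases hi : k ≤ i.val
    · have h1 : Λ ⟨k, hkn⟩ ≤ Λ i := hmono hi
      rw [hab, mul_one_div, le_div_iff₀ (hΛ _)]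
      have := mul_le_mul_of_nonneg_left h1 (mul_nonneg (hΛ i).le (sq_nonneg (b (U i) x)))
      nlinarith
    · have h0 := horth i hi
      have hb := hab i x
      rw [h0] at hb
      have : b (U i) x = 0 := by
        rcases mul_eq_zero.1 hb.symm with h | h
        · exact absurd h (hΛ i).ne'
        · exact h
      simp [this, h0]
  have u2 : (∑ j, c j ^ 2) * μ ⟨k, hkm⟩ ≤ b x x := by
    rw [e2, Finset.sum_mul]
    refine Finset.sum_le_sum fun j _ => mul_le_mul_of_nonneg_left (hμ ?_) (sq_nonneg _)
    exact Nat.lt_succ_iff.1 j.2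
  rw [e1] at u1
  exact le_of_mul_le_mul_left (u2.trans u1) hpos

/-- The triangle inequality `‖e + r‖ ≤ (1 + q) ‖e‖` when `‖r‖ ≤ q ‖e‖`, in squared form. -/
theorem form_add_le (b : BilinForm ℝ V) (hs : ∀ x y, b x y = b y x) (hp : ∀ x, 0 ≤ b x x)
    (e r : V) (q : ℝ) (hq : 0 ≤ q) (h : b r r ≤ q ^ 2 * b e e) :
    b (e + r) (e + r) ≤ (1 + q) ^ 2 * b e e := by
  have h1 := form_cs b hs hp e r
  have h2 : (b e r) ^ 2 ≤ (q * b e e) ^ 2 :=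
    h1.trans ((mul_le_mul_of_nonneg_left h (hp e)).trans (le_of_eq (by ring)))
  have h3 := le_of_abs_le (abs_le_of_sq_le_sq h2 (mul_nonneg hq (hp e)))
  simp only [map_add, LinearMap.add_apply, hs r e]
  nlinarith

/-- The squared `b`-distance of an eigenvector `u` to the span of the first `k` Ritz vectors, in
terms of the squared `b`-norm of its projection error `u - p`. Here `μ j` are the inverse Ritz
values and `δ` separates those of index at least `k` from `1 / lam`. -/
theorem ritz_l2 {m k : ℕ} (hkm : k < m) (a b : BilinForm ℝ V)
    (bs : ∀ x y, b x y = b y x) (bp : ∀ x, 0 ≤ b x x)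
    (t : Fin m → V) (μ : Fin m → ℝ) (hμpos : ∀ j, 0 < μ j) (hμ : Antitone μ)
    (htb : ∀ i j, b (t i) (t j) = if i = j then μ j else 0)
    (u p : V) (lam : ℝ) (hlam : 0 < lam) (hu : ∀ v, a u v = lam * b u v)
    (hp : p = ∑ j, a u (t j) • t j) (δ : ℝ) (hδ : 0 < δ)
    (hgap : ∀ j : Fin m, k ≤ j.val → δ ≤ 1 / lam - μ j) :
    b u u - ∑ i : Fin k, (b u (t (Fin.castLE hkm.le i))) ^ 2 / μ (Fin.castLE hkm.le i) ≤
      (1 + μ ⟨k, hkm⟩ / δ) ^ 2 * b (u - p) (u - p) := by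
  set c : Fin m → ℝ := fun j => a u (t j) with hc
  set r : V := ∑ j with k ≤ j.val, c j • t j with hr
  have hbest := form_best b bs (t ∘ Fin.castLE hkm.le) (μ ∘ Fin.castLE hkm.le)
    (fun i => hμpos _) (by intro i j; simp [htb]) Finset.univ (c ∘ Fin.castLE hkm.le) u
  simp only [Function.comp_apply] at hbest
  refine hbest.trans ?_
  have hsplit : u - ∑ i : Fin k, c (Fin.castLE hkm.le i) • t (Fin.castLE hkm.le i)
      = (u - p) + r := by
    rw [hp, sum_split hkm.le (fun j => c j • t j)]
    abel
  rw [hsplit]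
  refine form_add_le b bs bp _ _ _ (div_nonneg (hμpos _).le hδ.le) ?_
  have hco : ∀ j, b (u - p) (t j) = c j * (1 / lam - μ j) := by
    intro j
    have h1 : b p (t j) = c j * μ j := by
      rw [hp]
      simp [htb, hc]
    have h2 : b u (t j) = c j / lam := by
      rw [hc]
      simp only [hu]
      field_simp
    rw [map_sub, LinearMap.sub_apply, h1, h2]
    ring
  have hbes := form_bessel b bs bp t μ hμpos htb (Finset.univ.filter fun j => k ≤ j.val) (u - p)
  refine le_trans ?_ (mul_le_mul_of_nonneg_left hbes (sq_nonneg _))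
  rw [hr, form_sum_self b t μ htb, Finset.mul_sum]
  refine Finset.sum_le_sum fun j hj => ?_
  have hj' : k ≤ j.val := (Finset.mem_filter.1 hj).2
  have hm : μ j ≤ μ ⟨k, hkm⟩ := hμ hj'
  rw [hco, div_pow, mul_pow, div_mul_div_comm, le_div_iff₀ (mul_pos (pow_pos hδ 2) (hμpos j))]
  have h1 : μ j ^ 2 ≤ μ ⟨k, hkm⟩ ^ 2 := pow_le_pow_left₀ (hμpos j).le hm 2
  have h2 : δ ^ 2 ≤ (1 / lam - μ j) ^ 2 := pow_le_pow_left₀ hδ.le (hgap j hj') 2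
  calc c j ^ 2 * μ j * (δ ^ 2 * μ j) = c j ^ 2 * (μ j ^ 2 * δ ^ 2) := by ring
    _ ≤ c j ^ 2 * (μ ⟨k, hkm⟩ ^ 2 * (1 / lam - μ j) ^ 2) := by gcongr
    _ = _ := by ring

/-- The sum of the squared projection errors of the first `k` eigenvectors onto the span of `y`
is controlled by the components of the `y i` along the remaining eigenvectors. The biorthogonality
`hty` with the orthonormal `t` says that the Gram matrix of `y` dominates the identity. -/
theorem proj_trace {n k : ℕ} (hkn : k < n) (a : BilinForm ℝ V)
    (as : ∀ x y, a x y = a y x) (ap : ∀ x, 0 ≤ a x x)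
    (U : Fin n → V) (hU : ∀ v, ∑ i, a (U i) v • U i = v)
    (hUo : ∀ i j, a (U i) (U j) = if i = j then 1 else 0)
    (t y : Fin k → V) (hta : ∀ i j, a (t i) (t j) = if i = j then 1 else 0)
    (hty : ∀ i j, a (t i) (y j) = if i = j then 1 else 0)
    (E : V → V) (hEm : ∀ x, E x ∈ Submodule.span ℝ (Set.range y))
    (hE : ∀ x, ∀ z ∈ Submodule.span ℝ (Set.range y), a (E x) z = a x z) :
    ∑ l : Fin k, a (U (Fin.castLE hkn.le l) - E (U (Fin.castLE hkn.le l)))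
        (U (Fin.castLE hkn.le l) - E (U (Fin.castLE hkn.le l))) ≤
      ∑ l with k ≤ l.val, ∑ i, (a (y i) (U l)) ^ 2 := by
  have hyspan : ∀ i, y i ∈ Submodule.span ℝ (Set.range y) :=
    fun i => Submodule.subset_span ⟨i, rfl⟩
  have hexp : ∀ x, E x = ∑ i, a (t i) (E x) • y i := by
    intro x
    obtain ⟨d, hd⟩ := (Submodule.mem_span_range_iff_exists_fun ℝ).1 (hEm x)
    rw [← hd]
    refine Finset.sum_congr rfl fun i _ => ?_
    simp [hty]
  have hEE : ∀ x, a (E x) (E x) = ∑ i, a (t i) (E x) * a (y i) x := by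
    intro x
    rw [hE x _ (hEm x), as]
    conv_lhs => rw [hexp x]
    simp
  -- Bessel for `t` bounds the coefficients of `E x`, and `2 p q ≤ p² + q²` absorbs half of it.
  have hle : ∀ x, a (E x) (E x) ≤ ∑ i, (a (y i) x) ^ 2 := by
    intro x
    have h1 := form_bessel a as ap t (fun _ => 1) (fun _ => one_pos) hta Finset.univ (E x)
    simp only [div_one, as (E x) (t _)] at h1
    have h2 : 2 * ∑ i, a (t i) (E x) * a (y i) x ≤
        ∑ i, (a (t i) (E x)) ^ 2 + ∑ i, (a (y i) x) ^ 2 := by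
      rw [Finset.mul_sum, ← Finset.sum_add_distrib]
      exact Finset.sum_le_sum fun i _ => by nlinarith [sq_nonneg (a (t i) (E x) - a (y i) x)]
    have h3 := hEE x
    linarith
  have htrace : ∑ l, a (E (U l)) (E (U l)) = k := by
    simp only [hEE]
    rw [Finset.sum_comm]
    have : ∀ i, ∑ l, a (t i) (E (U l)) * a (y i) (U l) = 1 := by
      intro i
      have h1 : ∀ l, a (t i) (E (U l)) = a (U l) (E (t i)) := fun l => by
        rw [← hE (t i) _ (hEm _), as, hE (U l) _ (hEm _)]
      simp only [h1, as (y i)]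
      rw [← parseval_a a U hU, hE _ _ (hyspan i), hty]
      simp
    simp [this]
  have hres : ∀ l, a (U l - E (U l)) (U l - E (U l)) = 1 - a (E (U l)) (E (U l)) := by
    intro l
    simp only [map_sub, LinearMap.sub_apply]
    rw [as (U l) (E (U l)), hUo, as (E (U l)) (U l), ← hE (U l) _ (hEm (U l))]
    simp
  simp only [hres]
  rw [sum_split hkn.le] at htrace
  rw [Finset.sum_sub_distrib]
  have h5 : ∑ l with k ≤ l.val, a (E (U l)) (E (U l)) ≤
      ∑ l with k ≤ l.val, ∑ i, (a (y i) (U l)) ^ 2 := Finset.sum_le_sum fun l _ => hle _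
  simp only [Finset.sum_const, Finset.card_univ, Fintype.card_fin, nsmul_eq_mul, mul_one]
  linarith

/-- The gain of one inverse iteration: the components of the `y i = lam i • A⁻¹ (t i)` outside the
first `k` eigenvectors, in terms of the `b`-distances of these eigenvectors to the span of `t`. -/
theorem power_step {n k : ℕ} (hk : 1 ≤ k) (hkn : k < n) (a b : BilinForm ℝ V)
    (bs : ∀ x y, b x y = b y x) (bp : ∀ x, 0 ≤ b x x)
    (U : Fin n → V) (Λ : Fin n → ℝ) (hΛ : ∀ i, 0 < Λ i) (hmono : Monotone Λ)
    (hU : ∀ v, ∑ i, a (U i) v • U i = v) (hab : ∀ i v, a (U i) v = Λ i * b (U i) v)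
    (hUo : ∀ i j, a (U i) (U j) = if i = j then 1 else 0)
    (t y : Fin k → V) (lam : Fin k → ℝ) (hlam : ∀ i, 0 < lam i) (hlmono : Monotone lam)
    (htb : ∀ i j, b (t i) (t j) = if i = j then 1 / lam j else 0)
    (hy : ∀ i v, a (y i) v = lam i * b (t i) v) :
    ∑ l with k ≤ l.val, ∑ i, (a (y i) (U l)) ^ 2 ≤
      lam ⟨k - 1, Nat.sub_lt hk Nat.one_pos⟩ *
        (Λ (Fin.castLE hkn.le ⟨k - 1, Nat.sub_lt hk Nat.one_pos⟩) / Λ ⟨k, hkn⟩) *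
      ∑ l : Fin k, (b (U (Fin.castLE hkn.le l)) (U (Fin.castLE hkn.le l)) -
        ∑ i, (b (U (Fin.castLE hkn.le l)) (t i)) ^ 2 / (1 / lam i)) := by
  set κ : Fin k := ⟨k - 1, Nat.sub_lt hk Nat.one_pos⟩ with hκ
  have hleκ : ∀ i : Fin k, i ≤ κ := fun i => Nat.le_sub_one_of_lt i.2
  have s1 : ∑ l with k ≤ l.val, ∑ i, (a (y i) (U l)) ^ 2 ≤
      lam κ / Λ ⟨k, hkn⟩ * ∑ l with k ≤ l.val, ∑ i, lam i * (Λ l * (b (U l) (t i)) ^ 2) := by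
    rw [Finset.mul_sum]
    refine Finset.sum_le_sum fun l hl => ?_
    rw [Finset.mul_sum]
    refine Finset.sum_le_sum fun i _ => ?_
    have hl' : Λ ⟨k, hkn⟩ ≤ Λ l := hmono ((Finset.mem_filter.1 hl).2 : k ≤ l.val)
    rw [hy, bs (t i), div_mul_eq_mul_div, le_div_iff₀ (hΛ _)]
    have hi := hlmono (hleκ i)
    have h0 := (hlam i).le
    have h1 := (hΛ ⟨k, hkn⟩).le
    calc (lam i * b (U l) (t i)) ^ 2 * Λ ⟨k, hkn⟩
        = (b (U l) (t i)) ^ 2 * lam i * (lam i * Λ ⟨k, hkn⟩) := by ring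
      _ ≤ (b (U l) (t i)) ^ 2 * lam i * (lam κ * Λ l) := by
          have h2 : lam i * Λ ⟨k, hkn⟩ ≤ lam κ * Λ l :=
            mul_le_mul hi hl' h1 (h0.trans hi)
          exact mul_le_mul_of_nonneg_left h2 (mul_nonneg (sq_nonneg _) h0)
      _ = _ := by ring
  have hbU : ∀ l, Λ l * b (U l) (U l) = 1 := fun l => by rw [← hab, hUo]; simp
  have tot : ∑ l, ∑ i, lam i * (Λ l * (b (U l) (t i)) ^ 2) = k := by
    rw [Finset.sum_comm]
    have : ∀ i, ∑ l, lam i * (Λ l * (b (U l) (t i)) ^ 2) = 1 := by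
      intro i
      rw [← Finset.mul_sum]
      simp only [pow_two]
      rw [← parseval_b a b U Λ hU hab, htb]
      simp [(hlam i).ne']
    simp [this]
  rw [sum_split hkn.le] at tot
  have s2 : ∑ l with k ≤ l.val, ∑ i, lam i * (Λ l * (b (U l) (t i)) ^ 2) =
      ∑ l : Fin k, Λ (Fin.castLE hkn.le l) *
        (b (U (Fin.castLE hkn.le l)) (U (Fin.castLE hkn.le l)) -
        ∑ i, (b (U (Fin.castLE hkn.le l)) (t i)) ^ 2 / (1 / lam i)) := by
    have : ∀ l : Fin k, Λ (Fin.castLE hkn.le l) *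
        (b (U (Fin.castLE hkn.le l)) (U (Fin.castLE hkn.le l)) -
        ∑ i, (b (U (Fin.castLE hkn.le l)) (t i)) ^ 2 / (1 / lam i)) =
        1 - ∑ i, lam i * (Λ (Fin.castLE hkn.le l) *
          (b (U (Fin.castLE hkn.le l)) (t i)) ^ 2) := by
      intro l
      rw [mul_sub, hbU, Finset.mul_sum]
      congr 1
      refine Finset.sum_congr rfl fun i _ => ?_
      rw [div_div_eq_mul_div]
      ring
    simp only [this]
    rw [Finset.sum_sub_distrib]
    simp only [Finset.sum_const, Finset.card_univ, Fintype.card_fin, nsmul_eq_mul, mul_one]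
    linarith
  have s3 : ∑ l : Fin k, Λ (Fin.castLE hkn.le l) *
        (b (U (Fin.castLE hkn.le l)) (U (Fin.castLE hkn.le l)) -
        ∑ i, (b (U (Fin.castLE hkn.le l)) (t i)) ^ 2 / (1 / lam i)) ≤
      Λ (Fin.castLE hkn.le κ) * ∑ l : Fin k,
        (b (U (Fin.castLE hkn.le l)) (U (Fin.castLE hkn.le l)) -
        ∑ i, (b (U (Fin.castLE hkn.le l)) (t i)) ^ 2 / (1 / lam i)) := by
    rw [Finset.mul_sum]
    refine Finset.sum_le_sum fun l _ => mul_le_mul_of_nonneg_right (hmono (hleκ l)) ?_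
    have := form_bessel b bs bp t (fun i => 1 / lam i) (fun i => one_div_pos.2 (hlam i)) htb
      Finset.univ (U (Fin.castLE hkn.le l))
    linarith
  rw [s2] at s1
  refine s1.trans ((mul_le_mul_of_nonneg_left s3 (div_nonneg (hlam _).le (hΛ _).le)).trans ?_)
  exact le_of_eq (by ring)

end Forms

/-! ### The energy form of `A` and the constant `η` -/

section Concrete
variable {n : ℕ} (A : Matrix (Fin n) (Fin n) ℝ)

theorem aN_nonneg (x : Fin n → ℝ) : 0 ≤ aN A x := Real.sqrt_nonneg _

theorem posDef_form_nonneg (hA : A.PosDef) (x : Fin n → ℝ) : 0 ≤ x ⬝ᵥ (A *ᵥ x) := by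
  simpa using hA.posSemidef.dotProduct_mulVec_nonneg x

theorem posDef_form_symm (hA : A.PosDef) (x y : Fin n → ℝ) :
    x ⬝ᵥ (A *ᵥ y) = y ⬝ᵥ (A *ᵥ x) := by
  have h : Aᵀ = A := by simpa using hA.isHermitian.eq
  rw [dotProduct_mulVec, ← mulVec_transpose, h, dotProduct_comm]

theorem aN_sq (hA : A.PosDef) (x : Fin n → ℝ) : (aN A x) ^ 2 = x ⬝ᵥ (A *ᵥ x) :=
  Real.sq_sqrt (posDef_form_nonneg A hA x)

theorem l2_sphere_compact : IsCompact {g : Fin n → ℝ | l2N g = 1} := by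
  refine Metric.isCompact_of_isClosed_isBounded ?_ ?_
  · refine isClosed_eq ?_ continuous_const
    unfold l2N dotProduct
    fun_prop
  · refine (Metric.isBounded_closedBall (x := (0 : Fin n → ℝ)) (r := 1)).subset fun g hg => ?_
    rw [mem_closedBall_zero_iff, pi_norm_le_iff_of_nonneg zero_le_one]
    intro i
    have h1 : g ⬝ᵥ g = 1 := by
      have : Real.sqrt (g ⬝ᵥ g) = 1 := hg
      simpa using this
    have h2 : g i * g i ≤ g ⬝ᵥ g :=
      Finset.single_le_sum (f := fun i => g i * g i) (fun i _ => mul_self_nonneg _)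
        (Finset.mem_univ i)
    rw [Real.norm_eq_abs, abs_le_one_iff_mul_self_le_one]
    linarith

/-- The supremum defining `η` is a genuine one, since the `L²` unit sphere is compact. -/
theorem etaK_bddAbove (P : (Fin n → ℝ) →ₗ[ℝ] (Fin n → ℝ)) :
    BddAbove ((fun g => aN A ((A⁻¹ *ᵥ g) - P (A⁻¹ *ᵥ g))) '' {g | l2N g = 1}) := by
  refine l2_sphere_compact.bddAbove_image (Continuous.continuousOn ?_)
  have hP : Continuous P := P.continuous_of_finiteDimensional
  unfold aN dotProduct
  have h1 : Continuous fun g : Fin n → ℝ => A⁻¹ *ᵥ g - P (A⁻¹ *ᵥ g) :=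
    (by fun_prop : Continuous fun g : Fin n → ℝ => A⁻¹ *ᵥ g).sub
      (hP.comp (by fun_prop : Continuous fun g : Fin n → ℝ => A⁻¹ *ᵥ g))
  have h2 : Continuous fun x : Fin n → ℝ => Real.sqrt (∑ i, x i * (A *ᵥ x) i) := by fun_prop
  exact h2.comp h1

theorem etaK_nonneg (P : (Fin n → ℝ) →ₗ[ℝ] (Fin n → ℝ)) : 0 ≤ etaK A P := by
  refine Real.sSup_nonneg ?_
  rintro _ ⟨g, _, rfl⟩
  exact aN_nonneg _ _

/-- The Aubin–Nitsche duality argument: the `L²` size of a projection error is controlled by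
`η` times its energy norm. -/
theorem nitsche (hA : A.PosDef) (K' : Submodule ℝ (Fin n → ℝ))
    (P : (Fin n → ℝ) →ₗ[ℝ] (Fin n → ℝ)) (hPmem : ∀ x, P x ∈ K')
    (hPproj : ∀ x, ∀ y ∈ K', (P x) ⬝ᵥ (A *ᵥ y) = x ⬝ᵥ (A *ᵥ y)) (x : Fin n → ℝ) :
    (x - P x) ⬝ᵥ (x - P x) ≤ (etaK A P) ^ 2 * ((x - P x) ⬝ᵥ (A *ᵥ (x - P x))) := by
  set e := x - P x with he
  have hee : 0 ≤ e ⬝ᵥ e := by simpa using dotProduct_star_self_nonneg e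
  rcases hee.eq_or_lt with h0 | hpos
  · rw [← h0]
    exact mul_nonneg (sq_nonneg _) (posDef_form_nonneg A hA e)
  set s := Real.sqrt (e ⬝ᵥ e) with hs
  have hspos : 0 < s := Real.sqrt_pos.2 hpos
  have hss : s * s = e ⬝ᵥ e := Real.mul_self_sqrt hee
  set g := s⁻¹ • e with hg
  have hgn : l2N g = 1 := by
    unfold l2N
    rw [hg, smul_dotProduct, dotProduct_smul, ← hss, smul_eq_mul, smul_eq_mul]
    field_simp
    simp
  set z := A⁻¹ *ᵥ g with hz
  have hAz : A *ᵥ z = g := by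
    rw [hz, mulVec_mulVec, mul_nonsing_inv _ ((isUnit_iff_isUnit_det _).1 hA.isUnit), one_mulVec]
  have hle : aN A (z - P z) ≤ etaK A P := le_csSup (etaK_bddAbove A P) ⟨g, hgn, rfl⟩
  have hsq : (z - P z) ⬝ᵥ (A *ᵥ (z - P z)) ≤ (etaK A P) ^ 2 := by
    rw [← aN_sq A hA]
    exact pow_le_pow_left₀ (aN_nonneg _ _) hle 2
  -- `e` is `A`-orthogonal to `K'`, so testing `A z = e / s` against `e` only sees `z - P z`.
  have hid : e ⬝ᵥ (A *ᵥ (z - P z)) = s := by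
    have h1 : e ⬝ᵥ (A *ᵥ (P z)) = 0 := by
      rw [he, sub_dotProduct, hPproj x _ (hPmem z), sub_self]
    rw [mulVec_sub, dotProduct_sub, h1, hAz, hg, dotProduct_smul, ← hss, smul_eq_mul]
    field_simp
    simp
  have hcs := form_cs (Matrix.toBilin' A)
    (by intro x y; simp only [Matrix.toBilin'_apply']; exact posDef_form_symm A hA x y)
    (by intro x; simp only [Matrix.toBilin'_apply']; exact posDef_form_nonneg A hA x) e (z - P z)
  simp only [Matrix.toBilin'_apply'] at hcs
  rw [hid] at hcs
  have := mul_le_mul_of_nonneg_left hsq (posDef_form_nonneg A hA e)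
  nlinarith

/-- An `A`-orthonormal family of `n` vectors in `ℝⁿ` is a basis: `UᵀAU = I` gives `UUᵀA = I`. -/
theorem eigen_expand (U : Fin n → (Fin n → ℝ))
    (hUortho : ∀ i j, U i ⬝ᵥ (A *ᵥ U j) = if i = j then (1 : ℝ) else 0) (v : Fin n → ℝ) :
    ∑ i, (U i ⬝ᵥ (A *ᵥ v)) • U i = v := by
  have h1 : Matrix.of U * (A * (Matrix.of U)ᵀ) = 1 := by
    ext i j
    rw [Matrix.one_apply, ← hUortho i j]
    rfl
  have h2 : (Matrix.of U)ᵀ * (Matrix.of U * A) = 1 := by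
    rw [← Matrix.mul_assoc] at h1
    exact mul_eq_one_comm.1 h1
  have h3 : ((Matrix.of U)ᵀ * (Matrix.of U * A)) *ᵥ v = v := by rw [h2, one_mulVec]
  rw [← mulVec_mulVec, ← mulVec_mulVec] at h3
  conv_rhs => rw [← h3]
  ext l
  simp only [Finset.sum_apply, Pi.smul_apply, smul_eq_mul]
  exact Finset.sum_congr rfl fun i _ => mul_comm _ _

theorem proj_expand {m : ℕ} (K' : Submodule ℝ (Fin n → ℝ)) (hm : Module.finrank ℝ K' = m)
    (tu : Fin m → (Fin n → ℝ)) (htu : ∀ j, tu j ∈ K')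
    (hto : ∀ i j, tu i ⬝ᵥ (A *ᵥ tu j) = if i = j then (1 : ℝ) else 0)
    (P : (Fin n → ℝ) →ₗ[ℝ] (Fin n → ℝ)) (hPmem : ∀ x, P x ∈ K')
    (hPproj : ∀ x, ∀ y ∈ K', (P x) ⬝ᵥ (A *ᵥ y) = x ⬝ᵥ (A *ᵥ y)) (x : Fin n → ℝ) :
    P x = ∑ j, (x ⬝ᵥ (A *ᵥ tu j)) • tu j := by
  have hco : ∀ (d : Fin m → ℝ) (j : Fin m), (∑ i, d i • tu i) ⬝ᵥ (A *ᵥ tu j) = d j := by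
    intro d j
    simp [sum_dotProduct, hto]
  have hli : LinearIndependent ℝ tu := by
    rw [Fintype.linearIndependent_iff]
    intro d hd j
    rw [← hco d j, hd, zero_dotProduct]
  have hspan : Submodule.span ℝ (Set.range tu) = K' := by
    refine Submodule.eq_of_le_of_finrank_eq (Submodule.span_le.2 ?_) ?_
    · rintro _ ⟨j, rfl⟩
      exact htu j
    · rw [finrank_span_eq_card hli, hm, Fintype.card_fin]
  obtain ⟨d, hd⟩ := (Submodule.mem_span_range_iff_exists_fun ℝ).1 (hspan ▸ hPmem x)
  rw [← hd]
  refine Finset.sum_congr rfl fun j _ => ?_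
  rw [← hPproj x _ (htu j), ← hd, hco]

/-- The `A`-orthogonal projection is the best approximation in the energy norm. -/
theorem proj_best (hA : A.PosDef) (K' : Submodule ℝ (Fin n → ℝ))
    (P : (Fin n → ℝ) →ₗ[ℝ] (Fin n → ℝ)) (hPmem : ∀ x, P x ∈ K')
    (hPproj : ∀ x, ∀ y ∈ K', (P x) ⬝ᵥ (A *ᵥ y) = x ⬝ᵥ (A *ᵥ y)) (x w : Fin n → ℝ)
    (hw : w ∈ K') :
    (x - P x) ⬝ᵥ (A *ᵥ (x - P x)) ≤ (x - w) ⬝ᵥ (A *ᵥ (x - w)) := by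
  have hd : P x - w ∈ K' := K'.sub_mem (hPmem x) hw
  have h1 : (x - P x) ⬝ᵥ (A *ᵥ (P x - w)) = 0 := by
    rw [sub_dotProduct, hPproj x _ hd, sub_self]
  have h2 : x - w = (x - P x) + (P x - w) := by abel
  rw [h2, mulVec_add, add_dotProduct, dotProduct_add, dotProduct_add, h1,
    posDef_form_symm A hA (P x - w) (x - P x), h1]
  linarith [posDef_form_nonneg A hA (P x - w)]

theorem eig_pos_of_normalized {y : Fin n → ℝ} {c : ℝ} (h : y ⬝ᵥ y * c = 1) : 0 < c := by
  have h0 : 0 ≤ y ⬝ᵥ y := by simpa using dotProduct_star_self_nonneg y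
  by_contra hc
  nlinarith

end Concrete

/-- Convergence of one step of the inverse power method on a subspace
(Theorem 4.1 / Algorithm 1): the new approximations `u_i^{(ℓ+1)}`, obtained by
solving the Ritz problem on `K' = K + span{u_1^{(ℓ)}, …, u_k^{(ℓ)}}` and then
solving `A u_i^{(ℓ+1)} = λ_i^{(ℓ+1)} ũ_i^{(ℓ+1)}`, satisfy
`(Σ ‖u_i − E^{(ℓ+1)} u_i‖_A²)^{1/2} ≤ θ_{K'} √(λ_k/λ_{k+1})
 (√(λ_k^{(ℓ+1)}) η_{K',k,k}) (Σ ‖u_i − E^{(ℓ)} u_i‖_A²)^{1/2}`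
for suitable `A`-orthonormal exact eigenvectors `u_1, …, u_k`. -/
theorem stmt7 {n : ℕ} (k : ℕ) (hk : 1 ≤ k) (hkn : k < n)
    (A : Matrix (Fin n) (Fin n) ℝ) (hA : A.PosDef)
    -- the eigenvalues `λ_1 ≤ ⋯ ≤ λ_n` of `A` with `A`-orthonormal eigenvectors
    (Λ : Fin n → ℝ) (U : Fin n → (Fin n → ℝ)) (hΛmono : Monotone Λ)
    (hUeig : ∀ i, A *ᵥ U i = Λ i • U i)
    (hUortho : ∀ i j, U i ⬝ᵥ (A *ᵥ U j) = if i = j then (1 : ℝ) else 0)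
    -- the given approximations `u_1^{(ℓ)}, …, u_k^{(ℓ)}` and
    -- the subspace `K' = K + span{u_1^{(ℓ)}, …, u_k^{(ℓ)}}` of dimension `m`
    (K : Submodule ℝ (Fin n → ℝ))
    (uprev : Fin k → (Fin n → ℝ)) (hli : LinearIndependent ℝ uprev)
    (K' : Submodule ℝ (Fin n → ℝ))
    (hK' : K' = K ⊔ Submodule.span ℝ (Set.range uprev))
    (m : ℕ) (hm : Module.finrank ℝ K' = m) (hkm : k < m)
    -- the Ritz pairs `(λ_j^{(ℓ+1)}, ũ_j^{(ℓ+1)})` of `A` on `K'`,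
    -- with `A`-orthonormal Ritz vectors
    (tlam : Fin m → ℝ) (tu : Fin m → (Fin n → ℝ)) (htmono : Monotone tlam)
    (htu : ∀ j, tu j ∈ K')
    (hRitz : ∀ j, ∀ v ∈ K', ((A *ᵥ tu j) - tlam j • tu j) ⬝ᵥ v = 0)
    (htortho : ∀ i j, tu i ⬝ᵥ (A *ᵥ tu j) = if i = j then (1 : ℝ) else 0)
    -- `P'` is the `A`-orthogonal projection onto `K'` (used in `η_{K'}`)
    (P' : (Fin n → ℝ) →ₗ[ℝ] (Fin n → ℝ))
    (hPmem : ∀ x, P' x ∈ K')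
    (hPproj : ∀ x, ∀ y ∈ K', (P' x) ⬝ᵥ (A *ᵥ y) = x ⬝ᵥ (A *ᵥ y))
    -- the new approximations `u_i^{(ℓ+1)} = λ_i^{(ℓ+1)} A⁻¹ ũ_i^{(ℓ+1)}`
    (unew : Fin k → (Fin n → ℝ))
    (hunew : ∀ i : Fin k,
      A *ᵥ unew i = tlam (Fin.castLE hkm.le i) • tu (Fin.castLE hkm.le i))
    -- `E^{(ℓ)}` and `E^{(ℓ+1)}`: the `A`-orthogonal projections onto
    -- `span{u_1^{(ℓ)}, …, u_k^{(ℓ)}}` and `span{u_1^{(ℓ+1)}, …, u_k^{(ℓ+1)}}`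
    (Eprev : (Fin n → ℝ) →ₗ[ℝ] (Fin n → ℝ))
    (hEprevmem : ∀ x, Eprev x ∈ Submodule.span ℝ (Set.range uprev))
    (hEprevproj : ∀ x, ∀ y ∈ Submodule.span ℝ (Set.range uprev),
      (Eprev x) ⬝ᵥ (A *ᵥ y) = x ⬝ᵥ (A *ᵥ y))
    (Enext : (Fin n → ℝ) →ₗ[ℝ] (Fin n → ℝ))
    (hEnextmem : ∀ x, Enext x ∈ Submodule.span ℝ (Set.range unew))
    (hEnextproj : ∀ x, ∀ y ∈ Submodule.span ℝ (Set.range unew),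
      (Enext x) ⬝ᵥ (A *ᵥ y) = x ⬝ᵥ (A *ᵥ y))
    -- the first `k` exact eigenvalues are those closest to the first `k`
    -- Ritz values (in terms of `μ = 1/λ`)
    (hclosest : ∀ (i : Fin k) (j : Fin n),
      |1 / tlam (Fin.castLE hkm.le i) - 1 / Λ (Fin.castLE hkn.le i)| ≤
        |1 / tlam (Fin.castLE hkm.le i) - 1 / Λ j|)
    -- `δ_{k,i}^{(ℓ+1)} > 0` is (a lower bound for)
    -- `min_{k < j ≤ m} |μ_j^{(ℓ+1)} − μ_i|`
    (δ : Fin k → ℝ) (hδpos : ∀ i, 0 < δ i)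
    (hδ : ∀ (i : Fin k) (j : Fin m), k ≤ (j : ℕ) →
      δ i ≤ |1 / tlam j - 1 / Λ (Fin.castLE hkn.le i)|) :
    ∃ u : Fin k → (Fin n → ℝ),
      (∀ i, A *ᵥ u i = Λ (Fin.castLE hkn.le i) • u i) ∧
      (∀ i j, u i ⬝ᵥ (A *ᵥ u j) = if i = j then (1 : ℝ) else 0) ∧
      Real.sqrt (∑ i : Fin k, (aN A (u i - Enext (u i))) ^ 2) ≤
        Real.sqrt (1 + (1 / tlam ⟨k, hkm⟩) * (etaK A P') ^ 2 /
            (δ ⟨k - 1, Nat.sub_lt hk Nat.one_pos⟩) ^ 2) *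
          Real.sqrt (Λ (Fin.castLE hkn.le ⟨k - 1, Nat.sub_lt hk Nat.one_pos⟩) /
            Λ ⟨k, hkn⟩) *
          (Real.sqrt (tlam (Fin.castLE hkm.le ⟨k - 1, Nat.sub_lt hk Nat.one_pos⟩)) *
            ((1 + (1 / tlam ⟨k, hkm⟩) / δ ⟨k - 1, Nat.sub_lt hk Nat.one_pos⟩) *
              etaK A P')) *
          Real.sqrt (∑ i : Fin k, (aN A (u i - Eprev (u i))) ^ 2) := by
  set κ : Fin k := ⟨k - 1, Nat.sub_lt hk Nat.one_pos⟩ with hκ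
  have hleκ : ∀ i : Fin k, i ≤ κ := fun i => Nat.le_sub_one_of_lt i.2
  set η := etaK A P' with hη
  have hη0 : 0 ≤ η := etaK_nonneg A P'
  -- The energy and the `L²` inner products as bilinear forms.
  set a := Matrix.toBilin' A with ha
  set b := Matrix.toBilin' (1 : Matrix (Fin n) (Fin n) ℝ) with hb
  have av : ∀ x y, a x y = x ⬝ᵥ (A *ᵥ y) := fun x y => Matrix.toBilin'_apply' A x y
  have bv : ∀ x y, b x y = x ⬝ᵥ y := fun x y => by
    rw [hb, Matrix.toBilin'_apply', one_mulVec]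
  have as : ∀ x y, a x y = a y x := fun x y => by
    rw [av, av]; exact posDef_form_symm A hA x y
  have ap : ∀ x, 0 ≤ a x x := fun x => by rw [av]; exact posDef_form_nonneg A hA x
  have bs : ∀ x y, b x y = b y x := fun x y => by rw [bv, bv]; exact dotProduct_comm x y
  have bp : ∀ x, 0 ≤ b x x := fun x => by
    rw [bv]; simpa using dotProduct_star_self_nonneg x
  have hab : ∀ i v, a (U i) v = Λ i * b (U i) v := fun i v => by
    rw [as, av, bv, hUeig, dotProduct_smul, smul_eq_mul, dotProduct_comm]
  have hUo : ∀ i j, a (U i) (U j) = if i = j then 1 else 0 := fun i j => by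
    rw [av, hUortho]
  have hΛ : ∀ i, 0 < Λ i := fun i => by
    refine eig_pos_of_normalized (y := U i) ?_
    have := hUo i i
    rw [hab, bv, if_pos rfl] at this
    linarith
  have hU : ∀ v, ∑ i, a (U i) v • U i = v := fun v => by
    simp only [av]; exact eigen_expand A U hUortho v
  have hta : ∀ i j, a (tu i) (tu j) = if i = j then 1 else 0 := fun i j => by
    rw [av, htortho]
  have htab : ∀ j, ∀ v ∈ K', a (tu j) v = tlam j * b (tu j) v := fun j v hv => by
    have h := hRitz j v hv
    rw [sub_dotProduct, smul_dotProduct, smul_eq_mul] at h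
    rw [as, av, bv, dotProduct_comm]
    linarith
  have htl : ∀ j, 0 < tlam j := fun j => by
    refine eig_pos_of_normalized (y := tu j) ?_
    have := hta j j
    rw [htab j _ (htu j), bv, if_pos rfl] at this
    linarith
  have htb : ∀ i j, b (tu i) (tu j) = if i = j then 1 / tlam j else 0 := fun i j => by
    have h := htab i _ (htu j)
    rw [hta] at h
    split_ifs at h ⊢ with hij
    · subst hij
      rw [eq_div_iff (htl i).ne']
      linarith
    · rcases mul_eq_zero.1 h.symm with h | h
      · exact absurd h (htl i).ne'
      · exact h
  have hμpos : ∀ j, 0 < 1 / tlam j := fun j => one_div_pos.2 (htl j)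
  have hμ : Antitone fun j => 1 / tlam j := fun i j hij =>
    one_div_le_one_div_of_le (htl i) (htmono hij)
  have hinter : 1 / tlam ⟨k, hkm⟩ ≤ 1 / Λ ⟨k, hkn⟩ :=
    ritz_ge hkn hkm a b U Λ hΛ hΛmono hU hab tu (fun j => 1 / tlam j) hμ hta htb
  -- By interlacing `μ_j^{(ℓ+1)} ≤ μ_k ≤ μ_l`, so the gap at index `k` is the smallest one.
  have hgap : ∀ (l : Fin k) (j : Fin m), k ≤ j.val →
      δ κ ≤ 1 / Λ (Fin.castLE hkn.le l) - 1 / tlam j := by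
    intro l j hj
    have h1 : 1 / tlam j ≤ 1 / tlam ⟨k, hkm⟩ := hμ (show (⟨k, hkm⟩ : Fin m) ≤ j from hj)
    have h2 : 1 / Λ ⟨k, hkn⟩ ≤ 1 / Λ (Fin.castLE hkn.le κ) :=
      one_div_le_one_div_of_le (hΛ _) (hΛmono (show κ.val ≤ k from κ.2.le))
    have h3 : 1 / Λ (Fin.castLE hkn.le κ) ≤ 1 / Λ (Fin.castLE hkn.le l) :=
      one_div_le_one_div_of_le (hΛ _) (hΛmono (hleκ l))
    have h4 := hδ κ j hj
    rw [abs_of_nonpos (by linarith)] at h4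
    linarith
  set q := 1 / tlam ⟨k, hkm⟩ / δ κ with hq
  have hq0 : 0 ≤ q := div_nonneg (hμpos _).le (hδpos _).le
  have hy : ∀ (i : Fin k) v,
      a (unew i) v = tlam (Fin.castLE hkm.le i) * b (tu (Fin.castLE hkm.le i)) v := fun i v => by
    rw [as, av, hunew, dotProduct_smul, smul_eq_mul, bv, dotProduct_comm]
  -- The `L²` distance of `U l` to the first `k` Ritz vectors.
  have hl2 : ∀ l : Fin k, b (U (Fin.castLE hkn.le l)) (U (Fin.castLE hkn.le l)) -
      ∑ i : Fin k, (b (U (Fin.castLE hkn.le l)) (tu (Fin.castLE hkm.le i))) ^ 2 /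
        (1 / tlam (Fin.castLE hkm.le i)) ≤
      ((1 + q) * η) ^ 2 * a (U (Fin.castLE hkn.le l) - Eprev (U (Fin.castLE hkn.le l)))
        (U (Fin.castLE hkn.le l) - Eprev (U (Fin.castLE hkn.le l))) := by
    intro l
    set u := U (Fin.castLE hkn.le l) with hu
    have hpe : P' u = ∑ j, a u (tu j) • tu j := by
      simp only [av]
      exact proj_expand A K' hm tu htu htortho P' hPmem hPproj u
    refine (ritz_l2 hkm a b bs bp tu (fun j => 1 / tlam j) hμpos hμ htb u (P' u)
      (Λ (Fin.castLE hkn.le l)) (hΛ _) (hab _) hpe (δ κ) (hδpos _) (hgap l)).trans ?_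
    rw [mul_pow, mul_assoc]
    refine mul_le_mul_of_nonneg_left ?_ (sq_nonneg _)
    have h1 := nitsche A hA K' P' hPmem hPproj u
    have h2 := proj_best A hA K' P' hPmem hPproj u (Eprev u)
      (hK' ▸ (le_sup_right : _ ≤ K ⊔ _) (hEprevmem u))
    rw [bv, av]
    exact h1.trans (mul_le_mul_of_nonneg_left h2 (sq_nonneg _))
  have hinj := Fin.castLE_injective hkm.le
  have htr := proj_trace hkn a as ap U hU hUo (tu ∘ Fin.castLE hkm.le) unew
    (by intro i j; simp [hta])
    (by
      intro i j
      rw [as, hy, Function.comp_apply, htb]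
      simp only [hinj.eq_iff]
      rcases eq_or_ne j i with rfl | hij
      · simp [(htl _).ne']
      · simp [hij, hij.symm])
    Enext hEnextmem (by intro x z hz; rw [av, av]; exact hEnextproj x z hz)
  have hpw := power_step hk hkn a b bs bp U Λ hΛ hΛmono hU hab hUo
    (tu ∘ Fin.castLE hkm.le) unew (tlam ∘ Fin.castLE hkm.le) (fun i => htl _)
    (fun i j hij => htmono hij) (by intro i j; simp [htb]) hy
  simp only [Function.comp_apply, ← hκ] at hpw
  have hρ0 : 0 ≤ Λ (Fin.castLE hkn.le κ) / Λ ⟨k, hkn⟩ := div_nonneg (hΛ _).le (hΛ _).le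
  have hmain := (htr.trans hpw).trans (mul_le_mul_of_nonneg_left
    (Finset.sum_le_sum fun l _ => hl2 l) (mul_nonneg (htl _).le hρ0))
  rw [← Finset.mul_sum] at hmain
  refine ⟨fun i => U (Fin.castLE hkn.le i), fun i => hUeig _, fun i j => ?_, ?_⟩
  · rw [hUortho]
    simp
  simp only [aN_sq A hA, ← av]
  refine (Real.sqrt_le_sqrt hmain).trans ?_
  set S := ∑ i : Fin k, a (U (Fin.castLE hkn.le i) - Eprev (U (Fin.castLE hkn.le i)))
        (U (Fin.castLE hkn.le i) - Eprev (U (Fin.castLE hkn.le i))) with hS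
  have hqη : 0 ≤ (1 + q) * η := mul_nonneg (by linarith) hη0
  rw [Real.sqrt_mul (mul_nonneg (htl _).le hρ0), Real.sqrt_mul (htl _).le,
    Real.sqrt_mul (sq_nonneg _), Real.sqrt_sq hqη]
  -- The factor `θ` only enters through `1 ≤ θ`.
  have hθ : 1 ≤ Real.sqrt (1 + 1 / tlam ⟨k, hkm⟩ * η ^ 2 / δ κ ^ 2) := by
    rw [Real.one_le_sqrt]
    have := div_nonneg (mul_nonneg (hμpos ⟨k, hkm⟩).le (sq_nonneg η)) (sq_nonneg (δ κ))
    linarith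
  have hX : 0 ≤ Real.sqrt (Λ (Fin.castLE hkn.le κ) / Λ ⟨k, hkn⟩) *
      (Real.sqrt (tlam (Fin.castLE hkm.le κ)) * ((1 + q) * η)) * Real.sqrt S := by positivity
  calc _ = 1 * (Real.sqrt (Λ (Fin.castLE hkn.le κ) / Λ ⟨k, hkn⟩) *
      (Real.sqrt (tlam (Fin.castLE hkm.le κ)) * ((1 + q) * η)) * Real.sqrt S) := by ring
    _ ≤ _ := mul_le_mul_of_nonneg_right hθ hX
    _ = _ := by ring
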